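/- Let A : Matrix (Fin n) (Fin n) ℝ. Define lev₀ : Fin n → Fin n → ℕ∞ by lev₀ i j = 0 if A i j ≠ 0 and lev₀ i j = ⊤ otherwise, and define lev : Fin n → Fin n → ℕ∞ by the well-founded recursion (on min i j) lev i j = min (lev₀ i j) (⨅ over k with k < i and k < j of (lev i k + lev k j + 1)). Then for all i, j: lev i j ≤ 1 if and only if A i j ≠ 0, or there exists k with k < i, k < j, A i k ≠ 0 and A k j ≠ 0. -/

import Mathlib

/-- Initial level function of the level-of-fill ILU: `0` at the nonzero positions of
`A` and `∞` elsewhere. -/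
noncomputable def lev₀ {n : ℕ} (A : Matrix (Fin n) (Fin n) ℝ) (i j : Fin n) : ℕ∞ :=
  if A i j ≠ 0 then 0 else ⊤

/-- The level-of-fill function, defined by well-founded recursion (on `min i j`):
`lev i j = min (lev₀ i j) (⨅_{k < i, k < j} (lev i k + lev k j + 1))`. -/
noncomputable def lev {n : ℕ} (A : Matrix (Fin n) (Fin n) ℝ) (i j : Fin n) : ℕ∞ :=
  min (lev₀ A i j)
    (⨅ k : {k : Fin n // k < i ∧ k < j}, lev A i k.1 + lev A k.1 j + 1)
termination_by min i.1 j.1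
decreasing_by
  · have h1 : (k.1 : ℕ) < i.1 := k.2.1
    have h2 : (k.1 : ℕ) < j.1 := k.2.2
    omega
  · have h1 : (k.1 : ℕ) < i.1 := k.2.1
    have h2 : (k.1 : ℕ) < j.1 := k.2.2
    omega

theorem lev_eq_zero_iff_aux {n : ℕ} (A : Matrix (Fin n) (Fin n) ℝ) (i j : Fin n) :
    lev A i j = 0 ↔ A i j ≠ 0 := by
  rw [← ENat.lt_one_iff_eq_zero, lev, min_lt_iff, iInf_lt_iff]
  constructor
  · rintro (h | ⟨k, hk⟩)
    · by_contra h0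
      simp [lev₀, h0] at h
    · exact absurd hk (not_lt.mpr le_add_self)
  · intro h
    left
    simp [lev₀, h]

/-- Characterization of the positions of level of fill at most `1`: `lev i j ≤ 1` iff
`a_ij ≠ 0` or there is `k < i, j` with `a_ik ≠ 0` and `a_kj ≠ 0`, i.e., in `ILU(1)`
fill-in is permitted by original entries only. -/
theorem lev_le_one_iff {n : ℕ} (A : Matrix (Fin n) (Fin n) ℝ) (i j : Fin n) :
    lev A i j ≤ 1 ↔
      A i j ≠ 0 ∨ ∃ k : Fin n, k < i ∧ k < j ∧ A i k ≠ 0 ∧ A k j ≠ 0 := by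
  have two : ∀ x : ℕ∞, x ≤ 1 ↔ x < 2 := by
    intro x
    have := ENat.lt_add_one_iff (m := x) (n := 1) (by simp)
    rw [← this, one_add_one_eq_two]
  rw [two, lev, min_lt_iff, iInf_lt_iff]
  have h1 : lev₀ A i j < 2 ↔ A i j ≠ 0 := by
    by_cases h : A i j = 0 <;> simp [lev₀, h]
  rw [h1]
  refine or_congr Iff.rfl ?_
  have h2 : ∀ x y : ℕ∞, x + y + 1 < 2 ↔ x = 0 ∧ y = 0 := by
    intro x y
    rw [← add_eq_zero, ← ENat.lt_one_iff_eq_zero, ← one_add_one_eq_two]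
    exact ENat.add_lt_add_iff_right (by simp)
  simp only [h2, lev_eq_zero_iff_aux]
  constructor
  · rintro ⟨⟨k, hi, hj⟩, h⟩
    exact ⟨k, hi, hj, h⟩
  · rintro ⟨k, hi, hj, h⟩
    exact ⟨⟨k, hi, hj⟩, h⟩
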